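/- For every ε > 0 there exists N such that for all n ≥ N there exists a truly n-variate Boolean function f : {0,1}^n → {0,1} with pdeg(f) ≤ (log₂ n)^{1/2+ε}. -/

import Mathlib

open scoped Classical

noncomputable def evalBool {ι : Type} (a : ι → Bool) (P : MvPolynomial ι ℝ) : ℝ :=
  MvPolynomial.eval (fun i => if a i then (1:ℝ) else 0) P

def HasProbPoly {ι : Type} (f : (ι → Bool) → Bool) (ε : ℝ) (d : ℕ) : Prop :=
  ∃ (k : ℕ) (w : Fin k → ℝ) (P : Fin k → MvPolynomial ι ℝ),
    (∀ i, 0 ≤ w i) ∧ (∑ i, w i = 1) ∧ (∀ i, (P i).totalDegree ≤ d) ∧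
    ∀ a : ι → Bool,
      ∑ i ∈ Finset.univ.filter
          (fun i => evalBool a (P i) ≠ (if f a then (1:ℝ) else 0)), w i ≤ ε

noncomputable def pdeg {ι : Type} (ε : ℝ) (f : (ι → Bool) → Bool) : ℕ :=
  sInf {d | HasProbPoly f ε d}

def TrulyVariate {ι : Type} (f : (ι → Bool) → Bool) : Prop :=
  ∀ i : ι, ∃ a, f (Function.update a i (!(a i))) ≠ f a

def ORf (n : ℕ) : (Fin n → Bool) → Bool := fun a => decide (∃ i, a i = true)

noncomputable def sensitivity {n : ℕ} (f : (Fin n → Bool) → Bool) : ℕ :=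
  Finset.univ.sup (fun a : Fin n → Bool =>
    (Finset.univ.filter (fun i : Fin n => f (Function.update a i (!(a i))) ≠ f a)).card)

/-!
Address `n` data bits by `r ≈ √(log n)` blocks of `2 ^ r` bits, each block encoding one symbol in
unary. There are `2 ^ (r ^ 2) ≥ n` addresses, yet the address occupies only `r * 2 ^ r`, far fewer
than `n`, bits. Unary encoding makes the indicator of an address a monomial of degree `r`, so, as
long as no block contains two ones, the addressing function is a polynomial of degree `r + 1`.

That no block contains two ones is a NOR of fewer than `2 ^ (3 * r)` monomials of degree `2`. Halve
the set of monomials at random `3 * r + t` times and, at each stage, multiply by a polynomial in the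
number `w` of surviving ones that is `1` at `w = 0` and `0` at `w = 1, …, t`. The product is `1`
without ones, and it vanishes unless `w` jumps from above `t` to `0` or never gets down to `t`;
both are unlikely, the first because a large set becomes empty in one halving at most `2⁻ᵗ` times as
often as it drops to at most `t` elements. For fixed `t` the product has degree `O(r)`, and so does
its product with the addressing polynomial.
-/

section RandomHalving

open Finset
open scoped BigOperators

variable {E : Type*} [Fintype E]

lemma expect_card_inter (V : Finset E) : 𝔼 S : Finset E, (#(V ∩ S) : ℝ) = #V / 2 := by
  have hcompl : 𝔼 S : Finset E, (#(V ∩ Sᶜ) : ℝ) = 𝔼 S : Finset E, (#(V ∩ S) : ℝ) :=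
    Fintype.expect_bijective compl compl_bijective _ _ fun _ => rfl
  have hsum : 𝔼 S : Finset E, (#(V ∩ S) : ℝ) + 𝔼 S : Finset E, (#(V ∩ Sᶜ) : ℝ) = #V := by
    rw [← expect_add_distrib]
    simp only [← sdiff_eq_inter_compl, ← Nat.cast_add, card_inter_add_card_sdiff,
      Fintype.expect_const]
  linarith

lemma two_pow_card_mul_card_inter_eq_zero_le {V W : Finset E} (hWV : W ⊆ V) :
    2 ^ #W * #{S : Finset E | #(V ∩ S) = 0} ≤ #{S : Finset E | #(V ∩ S) ≤ #W} := by
  have recover {U S : Finset E} (hU : U ⊆ W) (hS : V ∩ S = ∅) :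
      V ∩ (S ∪ U) = U ∧ (S ∪ U) \ V = S := by
    constructor
    · rw [inter_union_distrib_left, hS, empty_union, inter_eq_right.2 (hU.trans hWV)]
    · rw [union_sdiff_distrib, sdiff_eq_empty_iff_subset.2 (hU.trans hWV), union_empty,
        (disjoint_iff_inter_eq_empty.2 hS).symm.sdiff_eq_left]
  rw [← card_powerset, ← card_product]
  refine card_le_card_of_injOn (fun p => p.2 ∪ p.1) ?_ ?_
  · rintro ⟨U, S⟩ h
    simp only [coe_product, coe_powerset, coe_filter, mem_univ, true_and, Set.mem_prod,
      Set.mem_preimage, Set.mem_powerset_iff, coe_subset, card_eq_zero, Set.mem_ofPred_eq] at h ⊢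
    rw [(recover h.1 h.2).1]
    exact card_le_card h.1
  · rintro ⟨U, S⟩ h ⟨U', S'⟩ h' (heq : S ∪ U = S' ∪ U')
    simp only [coe_product, coe_powerset, coe_filter, mem_univ, true_and, Set.mem_prod,
      Set.mem_preimage, Set.mem_powerset_iff, coe_subset, card_eq_zero, Set.mem_ofPred_eq] at h h'
    obtain ⟨hU, hS⟩ := recover h.1 h.2
    obtain ⟨hU', hS'⟩ := recover h'.1 h'.2
    rw [Prod.mk.injEq]
    exact ⟨by rw [← hU, ← hU', heq], by rw [← hS, ← hS', heq]⟩

lemma two_pow_mul_expect_inter_eq_zero_le {V : Finset E} {t : ℕ} (ht : t ≤ #V) :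
    2 ^ t * 𝔼 S : Finset E, (if #(V ∩ S) = 0 then 1 else 0 : ℝ) ≤
      𝔼 S : Finset E, if #(V ∩ S) ≤ t then 1 else 0 := by
  obtain ⟨W, hWV, rfl⟩ := exists_subset_card_eq ht
  simp only [Fintype.expect_eq_sum_div_card, sum_boole, ← mul_div_assoc]
  gcongr
  exact_mod_cast two_pow_card_mul_card_inter_eq_zero_le hWV

/-- The set `S 0 ∩ ⋯ ∩ S (k - 1)`, which is everything when `k = 0`. -/
noncomputable def nestedInter {K : ℕ} (S : Fin K → Finset E) (k : Fin (K + 1)) : Finset E :=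
  {e | ∀ i : Fin K, (i : ℕ) < k → e ∈ S i}

lemma nestedInter_zero {K : ℕ} (S : Fin K → Finset E) : nestedInter S 0 = univ := by
  simp [nestedInter]

lemma nestedInter_cons_succ {K : ℕ} (S₀ : Finset E) (S : Fin K → Finset E) (k : Fin (K + 1)) :
    nestedInter (Fin.cons S₀ S : Fin (K + 1) → Finset E) k.succ = S₀ ∩ nestedInter S k := by
  ext e
  simp only [nestedInter, Fin.forall_fin_succ, mem_filter, mem_univ, true_and, mem_inter,
    Fin.cons_zero, Fin.cons_succ, Fin.val_zero, Fin.val_succ, Nat.succ_pos, true_implies,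
    add_lt_add_iff_right]

/-- The event that the decreasing chain `V ⊇ V ∩ S 0 ⊇ V ∩ S 0 ∩ S 1 ⊇ ⋯` never has between `1`
and `t` elements, that is, that sampling fails to isolate a few elements of `V`. -/
def Escapes (t : ℕ) (V : Finset E) {K : ℕ} (S : Fin K → Finset E) : Prop :=
  ∀ k : Fin (K + 1), #(V ∩ nestedInter S k) ∉ Icc 1 t

lemma escapes_cons {t K : ℕ} {V S₀ : Finset E} {S : Fin K → Finset E} :
    Escapes t V (Fin.cons S₀ S : Fin (K + 1) → Finset E) ↔
      #V ∉ Icc 1 t ∧ Escapes t (V ∩ S₀) S := by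
  simp only [Escapes, Fin.forall_fin_succ (n := K + 1), nestedInter_zero, inter_univ,
    nestedInter_cons_succ, inter_assoc]

/-- A bound for the probability that a set of `w` elements escapes `K` uniform samples. The last
term is chosen so that a halving step preserves the bound: a large set becomes empty at most
`2⁻ᵗ` times as often as it gets at most `t` elements. -/
noncomputable def escapeBound (t K w : ℕ) : ℝ :=
  w / 2 ^ K + (if w = 0 then 1 else 0) + (if t < w then 1 else 0) / 2 ^ t

lemma escapeBound_nonneg (t K w : ℕ) : 0 ≤ escapeBound t K w := by
  unfold escapeBound
  positivity

lemma one_le_escapeBound_zero_right (t K : ℕ) : 1 ≤ escapeBound t K 0 := by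
  simp [escapeBound]

lemma one_le_escapeBound_zero_left (t w : ℕ) : 1 ≤ escapeBound t 0 w := by
  obtain rfl | hw := Nat.eq_zero_or_pos w
  · exact one_le_escapeBound_zero_right t 0
  · have : (1 : ℝ) ≤ w := by exact_mod_cast hw
    unfold escapeBound
    rw [pow_zero, div_one, add_assoc]
    exact le_add_of_le_of_nonneg this (by positivity)

lemma escapeBound_le {t K w : ℕ} (hw : w ≠ 0) : escapeBound t K w ≤ w / 2 ^ K + 1 / 2 ^ t := by
  rw [escapeBound, if_neg hw, add_zero]
  gcongr
  split_ifs <;> norm_num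

lemma expect_escapeBound_card_inter_le {t : ℕ} {V : Finset E} (hV : t < #V) (K : ℕ) :
    𝔼 S : Finset E, escapeBound t K #(V ∩ S) ≤ escapeBound t (K + 1) #V := by
  have hcompl : 𝔼 S : Finset E, (if #(V ∩ S) ≤ t then 1 else 0 : ℝ) +
      𝔼 S : Finset E, (if t < #(V ∩ S) then 1 else 0 : ℝ) = 1 := by
    rw [← expect_add_distrib, ← Fintype.expect_one (ι := Finset E)]
    refine expect_congr rfl fun S _ => ?_
    by_cases h : #(V ∩ S) ≤ t <;> simp [h, ← not_le]
  have hempty := two_pow_mul_expect_inter_eq_zero_le hV.le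
  simp only [escapeBound, expect_add_distrib, ← expect_div, expect_card_inter]
  rw [if_neg (Nat.ne_zero_of_lt hV), if_pos hV, add_zero, add_assoc, pow_succ', ← div_div]
  gcongr
  rw [← le_sub_iff_add_le, ← sub_div, le_div_iff₀' (by positivity)]
  linarith

lemma expect_fin_succ {α : Type*} [Fintype α] {K : ℕ} (F : (Fin (K + 1) → α) → ℝ) :
    𝔼 S, F S = 𝔼 S₀, 𝔼 S, F (Fin.cons S₀ S) := by
  rw [← expect_product', univ_product_univ]
  exact (Fintype.expect_equiv (Fin.consEquiv fun _ => α) _ _ fun _ => rfl).symm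

lemma expect_escapes_le (t K : ℕ) (V : Finset E) :
    𝔼 S : Fin K → Finset E, (if Escapes t V S then 1 else 0 : ℝ) ≤ escapeBound t K #V := by
  have le_one (K : ℕ) (V : Finset E) :
      𝔼 S : Fin K → Finset E, (if Escapes t V S then 1 else 0 : ℝ) ≤ 1 :=
    expect_le univ_nonempty fun S _ => by split_ifs <;> norm_num
  induction K generalizing V with
  | zero => exact (le_one 0 V).trans (one_le_escapeBound_zero_left t #V)
  | succ K ih =>
    obtain hV | hV | hV : #V = 0 ∨ #V ∈ Icc 1 t ∨ t < #V := by
      simp only [mem_Icc]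
      omega
    · rw [hV]
      exact (le_one (K + 1) V).trans (one_le_escapeBound_zero_right t (K + 1))
    · simpa only [expect_fin_succ, escapes_cons, hV, not_true_eq_false, false_and, if_false,
        expect_const_zero] using escapeBound_nonneg t (K + 1) #V
    · have hV' : #V ∉ Icc 1 t := fun h => hV.not_ge (mem_Icc.1 h).2
      simp only [expect_fin_succ, escapes_cons, hV', not_false_eq_true, true_and]
      exact (expect_le_expect fun S₀ _ => ih (V ∩ S₀)).trans
        (expect_escapeBound_card_inter_le hV K)

end RandomHalving

section ProbPoly

open scoped BigOperators

lemma HasProbPoly.comp {ι κ : Type} {f : (ι → Bool) → Bool} {δ : ℝ} {d : ℕ}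
    (h : HasProbPoly f δ d) (σ : ι → κ) : HasProbPoly (fun a : κ → Bool => f (a ∘ σ)) δ d := by
  obtain ⟨k, w, P, hw, hw_sum, hdeg, herr⟩ := h
  have eval_rename (a : κ → Bool) (Q : MvPolynomial ι ℝ) :
      evalBool a (MvPolynomial.rename σ Q) = evalBool (a ∘ σ) Q := by
    simp only [evalBool, MvPolynomial.eval_rename, Function.comp_def]
  refine ⟨k, w, fun i => MvPolynomial.rename σ (P i), hw, hw_sum,
    fun i => (MvPolynomial.totalDegree_rename_le _ _).trans (hdeg i), fun a => ?_⟩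
  simpa only [eval_rename] using herr (a ∘ σ)

lemma TrulyVariate.comp_equiv {ι κ : Type} {f : (ι → Bool) → Bool} (hf : TrulyVariate f)
    (σ : ι ≃ κ) : TrulyVariate (fun a : κ → Bool => f (a ∘ σ)) := by
  intro j
  obtain ⟨b, hb⟩ := hf (σ.symm j)
  refine ⟨b ∘ σ.symm, ?_⟩
  simpa [Function.update_comp_equiv, Function.comp_assoc] using hb

lemma trulyVariate_of_forall_exists_minimal {ι : Type} {f : (ι → Bool) → Bool}
    (h : ∀ i, ∃ a, a i = true ∧ f a = true ∧ ∀ b ≤ a, b i = false → f b = false) :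
    TrulyVariate f := by
  intro i
  obtain ⟨a, hi, hfa, hmin⟩ := h i
  refine ⟨a, ?_⟩
  rw [hi, Bool.not_true, hfa,
    hmin _ (update_le_self_iff.2 (Bool.false_le _)) (Function.update_self ..)]
  exact Bool.false_ne_true

lemma hasProbPoly_of_expect_le {ι Ω : Type} [Fintype Ω] [Nonempty Ω] {f : (ι → Bool) → Bool}
    {δ : ℝ} {d : ℕ} (P : Ω → MvPolynomial ι ℝ) (hdeg : ∀ ω, (P ω).totalDegree ≤ d)
    (herr : ∀ a, 𝔼 ω, (if evalBool a (P ω) ≠ (if f a then 1 else 0) then 1 else 0 : ℝ) ≤ δ) :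
    HasProbPoly f δ d := by
  let e := Fintype.equivFin Ω
  refine ⟨Fintype.card Ω, fun _ => (Fintype.card Ω : ℝ)⁻¹, fun i => P (e.symm i),
    fun _ => by positivity, by simp, fun i => hdeg _, fun a => ?_⟩
  refine le_trans (le_of_eq ?_) (herr a)
  rw [Fintype.expect_eq_sum_div_card, Finset.sum_div, ← e.symm.sum_comp, Finset.sum_filter]
  exact Finset.sum_congr rfl fun i _ => by split_ifs <;> simp

end ProbPoly

section NorPolynomial

open Finset
open scoped BigOperators

variable {ι : Type}

lemma evalBool_mul (a : ι → Bool) (P Q : MvPolynomial ι ℝ) :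
    evalBool a (P * Q) = evalBool a P * evalBool a Q :=
  map_mul _ P Q

lemma evalBool_sum {α : Type*} (a : ι → Bool) (T : Finset α) (P : α → MvPolynomial ι ℝ) :
    evalBool a (∑ x ∈ T, P x) = ∑ x ∈ T, evalBool a (P x) :=
  map_sum _ P T

lemma evalBool_prod {α : Type*} (a : ι → Bool) (T : Finset α) (P : α → MvPolynomial ι ℝ) :
    evalBool a (∏ x ∈ T, P x) = ∏ x ∈ T, evalBool a (P x) :=
  map_prod _ P T

lemma evalBool_X (a : ι → Bool) (i : ι) :
    evalBool a (MvPolynomial.X i) = if a i then 1 else 0 :=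
  MvPolynomial.eval_X i

/-- The polynomial `(1 - P) (1 - P / 2) ⋯ (1 - P / t)`, which takes the value `1` where `P` is `0`
and vanishes where `P` is one of `1, …, t`. -/
noncomputable def vanishUpTo (t : ℕ) (P : MvPolynomial ι ℝ) : MvPolynomial ι ℝ :=
  ∏ j ∈ Icc 1 t, (1 - MvPolynomial.C (j : ℝ)⁻¹ * P)

lemma totalDegree_vanishUpTo_le (t : ℕ) (P : MvPolynomial ι ℝ) :
    (vanishUpTo t P).totalDegree ≤ t * P.totalDegree := by
  have factor_le (c : ℝ) : (1 - MvPolynomial.C c * P).totalDegree ≤ P.totalDegree := by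
    refine (MvPolynomial.totalDegree_sub _ _).trans (max_le (by simp) ?_)
    simpa using MvPolynomial.totalDegree_mul (MvPolynomial.C c) P
  refine (MvPolynomial.totalDegree_finsetProd _ _).trans ?_
  simpa using sum_le_card_nsmul (Icc 1 t) _ _ fun j _ => factor_le (j : ℝ)⁻¹

lemma evalBool_vanishUpTo (t : ℕ) (P : MvPolynomial ι ℝ) (a : ι → Bool) :
    evalBool a (vanishUpTo t P) = ∏ j ∈ Icc 1 t, (1 - (j : ℝ)⁻¹ * evalBool a P) := by
  simp [vanishUpTo, evalBool]

lemma evalBool_vanishUpTo_eq_zero {t w : ℕ} {P : MvPolynomial ι ℝ} {a : ι → Bool}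
    (hP : evalBool a P = w) (hw : w ∈ Icc 1 t) : evalBool a (vanishUpTo t P) = 0 := by
  have hw₀ : (w : ℝ) ≠ 0 := by exact_mod_cast Nat.one_le_iff_ne_zero.1 (mem_Icc.1 hw).1
  rw [evalBool_vanishUpTo, hP]
  exact prod_eq_zero hw (by rw [inv_mul_cancel₀ hw₀, sub_self])

variable {E : Type} [Fintype E]

/-- For uniform samples `S`, a random polynomial computing the NOR of the Boolean values of the
`m e` with one-sided error: it is always `1` if they all vanish, and rarely nonzero otherwise. -/
noncomputable def norPoly (t : ℕ) (m : E → MvPolynomial ι ℝ) {K : ℕ} (S : Fin K → Finset E) :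
    MvPolynomial ι ℝ :=
  ∏ k, vanishUpTo t (∑ e ∈ nestedInter S k, m e)

lemma totalDegree_norPoly_le {m : E → MvPolynomial ι ℝ} {D : ℕ}
    (hm : ∀ e, (m e).totalDegree ≤ D) (t : ℕ) {K : ℕ} (S : Fin K → Finset E) :
    (norPoly t m S).totalDegree ≤ (K + 1) * (t * D) := by
  have factor_le (T : Finset E) : (vanishUpTo t (∑ e ∈ T, m e)).totalDegree ≤ t * D :=
    (totalDegree_vanishUpTo_le _ _).trans
      (Nat.mul_le_mul_left _ (MvPolynomial.totalDegree_finsetSum_le fun e _ => hm e))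
  refine (MvPolynomial.totalDegree_finsetProd _ _).trans ?_
  simpa using sum_le_card_nsmul univ _ _ fun k _ => factor_le (nestedInter S k)

lemma evalBool_norPoly_eq_one {m : E → MvPolynomial ι ℝ} {a : ι → Bool}
    (hm : ∀ e, evalBool a (m e) = 0) (t : ℕ) {K : ℕ} (S : Fin K → Finset E) :
    evalBool a (norPoly t m S) = 1 := by
  simp [norPoly, evalBool_prod, evalBool_vanishUpTo, evalBool_sum, hm]

lemma escapes_of_evalBool_norPoly_ne_zero {m : E → MvPolynomial ι ℝ} {a : ι → Bool}
    {V : Finset E} (hm : ∀ e, evalBool a (m e) = if e ∈ V then 1 else 0) {t K : ℕ}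
    {S : Fin K → Finset E} (h : evalBool a (norPoly t m S) ≠ 0) : Escapes t V S := by
  intro k hk
  have hsum : evalBool a (∑ e ∈ nestedInter S k, m e) = #(V ∩ nestedInter S k) := by
    simp only [evalBool_sum, hm, sum_boole, filter_mem_eq_inter, inter_comm]
  rw [norPoly, evalBool_prod] at h
  exact h (prod_eq_zero (mem_univ k) (evalBool_vanishUpTo_eq_zero hsum hk))

lemma expect_evalBool_norPoly_ne_zero_le {m : E → MvPolynomial ι ℝ} {a : ι → Bool}
    (hm : ∀ e, evalBool a (m e) = 0 ∨ evalBool a (m e) = 1) {e₀ : E}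
    (he₀ : evalBool a (m e₀) = 1) (t K : ℕ) :
    𝔼 S : Fin K → Finset E, (if evalBool a (norPoly t m S) ≠ 0 then 1 else 0 : ℝ) ≤
      Fintype.card E / 2 ^ K + 1 / 2 ^ t := by
  let V : Finset E := {e | evalBool a (m e) = 1}
  have hmV (e : E) : evalBool a (m e) = if e ∈ V then 1 else 0 := by
    obtain h | h := hm e <;> simp [V, h]
  have hV : #V ≠ 0 := card_ne_zero_of_mem (mem_filter.2 ⟨mem_univ e₀, he₀⟩)
  calc 𝔼 S : Fin K → Finset E, (if evalBool a (norPoly t m S) ≠ 0 then 1 else 0 : ℝ)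
      ≤ 𝔼 S : Fin K → Finset E, (if Escapes t V S then 1 else 0 : ℝ) :=
        expect_le_expect fun S _ => by
          by_cases h : evalBool a (norPoly t m S) = 0
          · rw [if_neg (not_not.2 h)]
            split_ifs <;> norm_num
          · rw [if_pos h, if_pos (escapes_of_evalBool_norPoly_ne_zero hmV h)]
    _ ≤ escapeBound t K #V := expect_escapes_le t K V
    _ ≤ #V / 2 ^ K + 1 / 2 ^ t := escapeBound_le hV
    _ ≤ Fintype.card E / 2 ^ K + 1 / 2 ^ t := by
        gcongr
        exact card_le_univ V

lemma hasProbPoly_of_guards {f : (ι → Bool) → Bool} {m : E → MvPolynomial ι ℝ} {D : ℕ}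
    (hm_deg : ∀ e, (m e).totalDegree ≤ D)
    (hm : ∀ a e, evalBool a (m e) = 0 ∨ evalBool a (m e) = 1)
    (hfm : ∀ a e, evalBool a (m e) = 1 → f a = false)
    {Q : MvPolynomial ι ℝ} {D' : ℕ} (hQ_deg : Q.totalDegree ≤ D')
    (hQ : ∀ a, (∀ e, evalBool a (m e) = 0) → evalBool a Q = if f a then 1 else 0)
    {t K : ℕ} {δ : ℝ} (hδ : (Fintype.card E : ℝ) / 2 ^ K + 1 / 2 ^ t ≤ δ) :
    HasProbPoly f δ ((K + 1) * (t * D) + D') := by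
  refine hasProbPoly_of_expect_le (fun S : Fin K → Finset E => norPoly t m S * Q)
    (fun S => (MvPolynomial.totalDegree_mul _ _).trans
      (add_le_add (totalDegree_norPoly_le hm_deg t S) hQ_deg)) fun a => ?_
  by_cases hguard : ∀ e, evalBool a (m e) = 0
  · have hδ₀ : 0 ≤ δ := le_trans (by positivity) hδ
    simpa [evalBool_mul, evalBool_norPoly_eq_one hguard, hQ a hguard] using hδ₀
  · push Not at hguard
    obtain ⟨e₀, he₀⟩ := hguard
    replace he₀ := (hm a e₀).resolve_left he₀
    refine le_trans (expect_le_expect fun S _ => ?_)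
      ((expect_evalBool_norPoly_ne_zero_le (hm a) he₀ t K).trans hδ)
    rw [hfm a e₀ he₀, evalBool_mul]
    by_cases h : evalBool a (norPoly t m S) = 0
    · simp [h]
    · rw [if_pos h]
      split_ifs <;> norm_num

end NorPolynomial

section BlockAddressing

open Finset MvPolynomial

variable {J I A : Type} (addr : A → J → I)

/-- The data bit `α` and all the bits of its address `addr α` are set in `a`; row `j` of the
`J × I` address bits encodes the symbol `addr α j` in unary. -/
def Selects (a : (J × I) ⊕ A → Bool) (α : A) : Prop :=
  (∀ j, a (Sum.inl (j, addr α j)) = true) ∧ a (Sum.inr α) = true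

/-- No row of the `J × I` address bits contains two ones. -/
def RowsSubsingleton (a : (J × I) ⊕ A → Bool) : Prop :=
  ∀ j i i', a (Sum.inl (j, i)) = true → a (Sum.inl (j, i')) = true → i = i'

/-- The addressing function with unary address blocks: its value is the data bit whose address is
encoded by the `J × I` bits, and `0` if these encode no address of a data bit. -/
noncomputable def blockAddr (a : (J × I) ⊕ A → Bool) : Bool :=
  decide (RowsSubsingleton a ∧ ∃ α, Selects addr a α)

lemma blockAddr_eq_true_iff {a : (J × I) ⊕ A → Bool} :
    blockAddr addr a = true ↔ RowsSubsingleton a ∧ ∃ α, Selects addr a α :=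
  decide_eq_true_iff

lemma blockAddr_eq_false_iff {a : (J × I) ⊕ A → Bool} :
    blockAddr addr a = false ↔ ¬(RowsSubsingleton a ∧ ∃ α, Selects addr a α) :=
  decide_eq_false_iff_not

/-- The input encoding the address of `α`, with the data bit `α` and no other data bit set. -/
noncomputable def addrPoint (α : A) : (J × I) ⊕ A → Bool :=
  Sum.elim (fun p => decide (p.2 = addr α p.1)) (fun β => decide (β = α))

lemma addrPoint_inl {α : A} {j : J} {i : I} :
    addrPoint addr α (Sum.inl (j, i)) = true ↔ i = addr α j := by
  simp only [addrPoint, Sum.elim_inl, decide_eq_true_eq]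

lemma addrPoint_inr {α β : A} : addrPoint addr α (Sum.inr β) = true ↔ β = α := by
  simp only [addrPoint, Sum.elim_inr, decide_eq_true_eq]

lemma blockAddr_addrPoint (α : A) : blockAddr addr (addrPoint addr α) = true := by
  simp only [blockAddr_eq_true_iff, RowsSubsingleton, Selects, addrPoint_inl, addrPoint_inr]
  exact ⟨fun j i i' h h' => h.trans h'.symm, α, fun j => rfl, rfl⟩

lemma blockAddr_eq_false_of_le_addrPoint {α : A} {b : (J × I) ⊕ A → Bool}
    (hb : b ≤ addrPoint addr α) {v : (J × I) ⊕ A} (hv : addrPoint addr α v = true)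
    (hbv : b v = false) : blockAddr addr b = false := by
  rw [blockAddr_eq_false_iff]
  rintro ⟨-, β, hβ_addr, hβ_data⟩
  obtain rfl := (addrPoint_inr addr).1 (hb _ hβ_data)
  suffices b v = true by simp [this] at hbv
  obtain ⟨j, i⟩ | γ := v
  · obtain rfl := (addrPoint_inl addr).1 hv
    exact hβ_addr j
  · obtain rfl := (addrPoint_inr addr).1 hv
    exact hβ_data

lemma trulyVariate_blockAddr (haddr : ∀ j i, ∃ α, addr α j = i) :
    TrulyVariate (blockAddr addr) := by
  refine trulyVariate_of_forall_exists_minimal fun v => ?_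
  obtain ⟨α, hv⟩ : ∃ α, addrPoint addr α v = true := by
    obtain ⟨j, i⟩ | α := v
    · obtain ⟨α, rfl⟩ := haddr j i
      exact ⟨α, (addrPoint_inl addr).2 rfl⟩
    · exact ⟨α, (addrPoint_inr addr).2 rfl⟩
  exact ⟨addrPoint addr α, hv, blockAddr_addrPoint addr α,
    fun b hb => blockAddr_eq_false_of_le_addrPoint addr hb hv⟩

/-- The monomial detecting that two given address bits of row `e.1.1` are both set; their columns
`e.1.2.1` and `e.1.2.2` are distinct. -/
noncomputable def clashMonomial (A : Type) (e : {e : J × I × I // e.2.1 ≠ e.2.2}) :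
    MvPolynomial ((J × I) ⊕ A) ℝ :=
  X (Sum.inl (e.1.1, e.1.2.1)) * X (Sum.inl (e.1.1, e.1.2.2))

lemma totalDegree_clashMonomial_le (e : {e : J × I × I // e.2.1 ≠ e.2.2}) :
    (clashMonomial A e).totalDegree ≤ 2 :=
  (totalDegree_mul _ _).trans (by simp)

lemma evalBool_clashMonomial (a : (J × I) ⊕ A → Bool) (e : {e : J × I × I // e.2.1 ≠ e.2.2}) :
    evalBool a (clashMonomial A e) =
      if a (Sum.inl (e.1.1, e.1.2.1)) = true ∧ a (Sum.inl (e.1.1, e.1.2.2)) = true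
      then 1 else 0 := by
  simp only [clashMonomial, evalBool_mul, evalBool_X, ite_zero_mul_ite_zero, mul_one]

lemma evalBool_clashMonomial_eq_zero_iff {a : (J × I) ⊕ A → Bool} :
    (∀ e, evalBool a (clashMonomial A e) = 0) ↔ RowsSubsingleton a := by
  simp only [RowsSubsingleton, evalBool_clashMonomial, ite_eq_right_iff, one_ne_zero,
    imp_false, Subtype.forall, Prod.forall, not_and]
  exact forall₃_congr fun j i i' => by tauto

variable [Fintype J]

/-- The sum of the data bits weighted by the indicators of their addresses; it agrees with
`blockAddr` as long as no row of address bits contains two ones. -/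
noncomputable def selectPoly [Fintype A] : MvPolynomial ((J × I) ⊕ A) ℝ :=
  ∑ α, (∏ j, X (Sum.inl (j, addr α j))) * X (Sum.inr α)

lemma totalDegree_selectPoly_le [Fintype A] :
    (selectPoly addr).totalDegree ≤ Fintype.card J + 1 := by
  refine totalDegree_finsetSum_le fun α _ => (totalDegree_mul _ _).trans ?_
  gcongr
  · exact (totalDegree_finsetProd _ _).trans (by simp)
  · simp

lemma evalBool_selectPoly [Fintype A] (a : (J × I) ⊕ A → Bool) :
    evalBool a (selectPoly addr) = ∑ α, if Selects addr a α then 1 else 0 := by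
  rw [selectPoly, evalBool_sum]
  refine sum_congr rfl fun α _ => ?_
  simp only [evalBool_mul, evalBool_prod, evalBool_X, prod_ite_zero, prod_const_one,
    ite_zero_mul_ite_zero, mul_one, mem_univ, true_imp_iff]
  exact if_congr Iff.rfl rfl rfl

variable {addr}

lemma evalBool_selectPoly_eq_blockAddr [Fintype A]
    (haddr : Function.Injective addr) {a : (J × I) ⊕ A → Bool} (ha : RowsSubsingleton a) :
    evalBool a (selectPoly addr) = if blockAddr addr a then 1 else 0 := by
  have selects_unique {α β : A} (hα : Selects addr a α) (hβ : Selects addr a β) : α = β :=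
    haddr (funext fun j => ha j _ _ (hα.1 j) (hβ.1 j))
  rw [evalBool_selectPoly]
  by_cases h : ∃ α, Selects addr a α
  · have hval : blockAddr addr a = true := (blockAddr_eq_true_iff addr).2 ⟨ha, h⟩
    obtain ⟨α, hα⟩ := h
    rw [hval, sum_eq_single α (fun β _ hβ => if_neg fun h => hβ (selects_unique h hα)) (by simp)]
    simp only [hα, if_true]
  · have hval : blockAddr addr a = false :=
      (blockAddr_eq_false_iff addr).2 fun h' => h h'.2
    push Not at h
    simp [hval, h]

lemma hasProbPoly_blockAddr [Fintype I] (haddr : Function.Injective addr) {t K : ℕ} {δ : ℝ}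
    (hδ : (Fintype.card J * Fintype.card I ^ 2 : ℝ) / 2 ^ K + 1 / 2 ^ t ≤ δ) :
    HasProbPoly (blockAddr addr) δ ((K + 1) * (t * 2) + (Fintype.card J + 1)) := by
  have := Fintype.ofInjective addr haddr
  have hcard : (Fintype.card {e : J × I × I // e.2.1 ≠ e.2.2} : ℝ) ≤
      Fintype.card J * Fintype.card I ^ 2 := by
    have hle := Fintype.card_subtype_le fun e : J × I × I => e.2.1 ≠ e.2.2
    rw [Fintype.card_prod, Fintype.card_prod, ← sq] at hle
    exact_mod_cast hle
  refine hasProbPoly_of_guards totalDegree_clashMonomial_le (fun a e => ?_) (fun a e he => ?_)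
    (totalDegree_selectPoly_le addr)
    (fun a ha => evalBool_selectPoly_eq_blockAddr haddr (evalBool_clashMonomial_eq_zero_iff.1 ha))
    (le_trans (by gcongr) hδ)
  · rw [evalBool_clashMonomial]
    split_ifs <;> simp
  · refine (blockAddr_eq_false_iff addr).2 fun h => ?_
    rw [evalBool_clashMonomial_eq_zero_iff.2 h.1 e] at he
    exact zero_ne_one he

end BlockAddressing

section Parameters

open Finset Filter

lemma exists_finset_card_eq_forall_const_mem {J I : Type*} [Fintype J] [Fintype I] {N : ℕ}
    (hI : Fintype.card I ≤ N) (hN : N ≤ Fintype.card I ^ Fintype.card J) :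
    ∃ A : Finset (J → I), #A = N ∧ ∀ i, Function.const J i ∈ A := by
  obtain ⟨A, hA, -, hcard⟩ := exists_subsuperset_card_eq
    (subset_univ (univ.image (Function.const J : I → J → I)))
    (card_image_le.trans hI) (by simpa using hN)
  exact ⟨A, hcard, fun i => hA (mem_image_of_mem _ (mem_univ i))⟩

lemma exists_trulyVariate_hasProbPoly {r s n : ℕ} (hn : r * s + s ≤ n)
    (hn' : n ≤ r * s + s ^ r) {t K : ℕ} {δ : ℝ}
    (hδ : (r * s ^ 2 : ℝ) / 2 ^ K + 1 / 2 ^ t ≤ δ) :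
    ∃ f : (Fin n → Bool) → Bool, TrulyVariate f ∧
      HasProbPoly f δ ((K + 1) * (t * 2) + (r + 1)) := by
  obtain ⟨A, hA, hconst⟩ := exists_finset_card_eq_forall_const_mem
    (J := Fin r) (I := Fin s) (N := n - r * s) (by simp; omega) (by simp; omega)
  have hcard : Fintype.card ((Fin r × Fin s) ⊕ A) = Fintype.card (Fin n) := by
    simp only [Fintype.card_sum, Fintype.card_prod, Fintype.card_fin, Fintype.card_coe, hA]
    omega
  let σ := Fintype.equivOfCardEq hcard
  let addr : A → Fin r → Fin s := Subtype.val
  refine ⟨fun a => blockAddr addr (a ∘ σ), ?_, ?_⟩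
  · exact (trulyVariate_blockAddr addr fun j i => ⟨⟨_, hconst i⟩, rfl⟩).comp_equiv σ
  · simpa only [Fintype.card_fin] using
      (hasProbPoly_blockAddr (addr := addr) Subtype.val_injective
        (by simpa only [Fintype.card_fin] using hδ)).comp σ

lemma two_pow_sqrt_log_sq_le {n : ℕ} (hn : n ≠ 0) : 2 ^ Nat.sqrt (Nat.log 2 n) ^ 2 ≤ n :=
  Nat.pow_le_of_le_log hn (Nat.sqrt_le' _)

lemma le_two_pow_succ_sqrt_log_sq (n : ℕ) : n ≤ 2 ^ (Nat.sqrt (Nat.log 2 n) + 1) ^ 2 :=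
  (Nat.lt_pow_succ_log_self one_lt_two n).le.trans
    (Nat.pow_le_pow_right two_pos (Nat.lt_succ_sqrt' _))

lemma mul_two_pow_sq_div_le (r t : ℕ) :
    (r * (2 ^ r : ℕ) ^ 2 : ℝ) / 2 ^ (3 * r + t) ≤ 1 / 2 ^ t := by
  have hr : (r : ℝ) ≤ 2 ^ r := by exact_mod_cast Nat.lt_two_pow_self.le
  calc (r * (2 ^ r : ℕ) ^ 2 : ℝ) / 2 ^ (3 * r + t)
      ≤ (2 ^ r * (2 ^ r : ℕ) ^ 2 : ℝ) / 2 ^ (3 * r + t) := by gcongr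
    _ = 1 / 2 ^ t := by
      push_cast
      field_simp
      ring

lemma exists_trulyVariate_hasProbPoly_sqrt_log {n : ℕ} (hn : 2 ^ 9 ≤ n) {t : ℕ} {δ : ℝ}
    (hδ : 1 / 2 ^ t + 1 / 2 ^ t ≤ δ) :
    ∃ (f : (Fin n → Bool) → Bool) (d : ℕ), TrulyVariate f ∧ HasProbPoly f δ d ∧
      d ≤ (2 * t ^ 2 + 14 * t + 3) * Nat.sqrt (Nat.log 2 n) := by
  have hq : 3 ≤ Nat.sqrt (Nat.log 2 n) :=
    Nat.le_sqrt.2 (Nat.le_log_of_pow_le one_lt_two hn)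
  have hlow := two_pow_sqrt_log_sq_le (n := n) (by omega)
  have hupp := le_two_pow_succ_sqrt_log_sq n
  set q := Nat.sqrt (Nat.log 2 n)
  have haddress : (q + 1) * 2 ^ (q + 1) + 2 ^ (q + 1) ≤ n :=
    calc (q + 1) * 2 ^ (q + 1) + 2 ^ (q + 1) = (q + 2) * 2 ^ (q + 1) := by ring
      _ ≤ 2 ^ (q + 1) * 2 ^ (q + 1) := Nat.mul_le_mul_right _ Nat.lt_two_pow_self
      _ = 2 ^ (2 * q + 2) := by ring
      _ ≤ 2 ^ q ^ 2 := Nat.pow_le_pow_right two_pos (by nlinarith)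
      _ ≤ n := hlow
  have hcodes : n ≤ (q + 1) * 2 ^ (q + 1) + (2 ^ (q + 1)) ^ (q + 1) := by
    rw [← pow_mul, ← sq]
    exact hupp.trans (Nat.le_add_left _ _)
  have herr := (add_le_add_left (mul_two_pow_sq_div_le (q + 1) t) _).trans hδ
  obtain ⟨f, hf, hprob⟩ := exists_trulyVariate_hasProbPoly haddress hcodes herr
  exact ⟨f, _, hf, hprob, by nlinarith⟩

lemma sqrt_log_le_sqrt_logb (n : ℕ) : (Nat.sqrt (Nat.log 2 n) : ℝ) ≤ √(Real.logb 2 n) :=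
  Real.nat_sqrt_le_real_sqrt.trans (Real.sqrt_le_sqrt (Real.natLog_le_logb n 2))

lemma eventually_const_mul_sqrt_le_rpow (c : ℝ) {ε : ℝ} (hε : 0 < ε) :
    ∀ᶠ x : ℝ in atTop, c * √x ≤ x ^ ((1 : ℝ) / 2 + ε) := by
  filter_upwards [eventually_gt_atTop 0, (tendsto_rpow_atTop hε).eventually_ge_atTop c]
    with x hx hc
  rw [Real.rpow_add hx, ← Real.sqrt_eq_rpow, mul_comm]
  gcongr

lemma tendsto_logb_two_natCast : Tendsto (fun n : ℕ => Real.logb 2 n) atTop atTop :=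
  (Real.tendsto_logb_atTop one_lt_two).comp tendsto_natCast_atTop_atTop

end Parameters

theorem unconditional_upper_bound_general {δ : ℝ} (hδ : 0 < δ) :
    ∃ c : ℝ, ∀ n : ℕ, 2 ^ 9 ≤ n → ∃ f : (Fin n → Bool) → Bool, TrulyVariate f ∧
      (pdeg δ f : ℝ) ≤ c * √(Real.logb 2 n) := by
  obtain ⟨t, ht⟩ := exists_pow_lt_of_lt_one (half_pos hδ) (one_half_lt_one (α := ℝ))
  rw [one_div, inv_pow, ← one_div] at ht
  refine ⟨2 * t ^ 2 + 14 * t + 3, fun n hn => ?_⟩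
  obtain ⟨f, d, hf, hprob, hd⟩ :=
    exists_trulyVariate_hasProbPoly_sqrt_log hn (t := t) (δ := δ) (by linarith)
  refine ⟨f, hf, ?_⟩
  calc (pdeg δ f : ℝ) ≤ d := by exact_mod_cast Nat.sInf_le hprob
    _ ≤ (2 * t ^ 2 + 14 * t + 3) * Nat.sqrt (Nat.log 2 n) := by exact_mod_cast hd
    _ ≤ (2 * t ^ 2 + 14 * t + 3) * √(Real.logb 2 n) := by
        gcongr
        exact sqrt_log_le_sqrt_logb n

theorem unconditional_upper_bound :
    ∀ ε : ℝ, 0 < ε → ∃ N : ℕ, ∀ n : ℕ, N ≤ n →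
      ∃ f : (Fin n → Bool) → Bool, TrulyVariate f ∧
        (pdeg (1/3) f : ℝ) ≤ (Real.logb 2 n) ^ ((1:ℝ)/2 + ε) := by
  intro ε hε
  obtain ⟨c, hc⟩ := unconditional_upper_bound_general (δ := 1 / 3) (by norm_num)
  obtain ⟨N, hN⟩ := Filter.eventually_atTop.1
    (tendsto_logb_two_natCast.eventually (eventually_const_mul_sqrt_le_rpow c hε))
  refine ⟨max (2 ^ 9) N, fun n hn => ?_⟩
  obtain ⟨f, hf, hdeg⟩ := hc n (le_of_max_le_left hn)
  exact ⟨f, hf, hdeg.trans (hN n (le_of_max_le_right hn))⟩
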